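/- arXiv:2602.08767 — 3 statements merged into one kernel-verified Lean document; each statement's English description precedes it below -/
import Mathlib

section
/- Let θ ≥ 0, Σ : ℝ² → M₂(ℝ) continuous, T > 0, v : [0,T] → ℝ² continuous, and let z be a classical solution on [0,T] of the tire PDE with input v. Define V(t) := (1/2)∫₀¹ z(ξ,t)ᵀ Q(ξ) z(ξ,t) dξ and F(t) := (𝒦₁ z(·,t)). Then for every t ∈ (0,T), V is differentiable at t and V′(t) = ∫₀¹ (θ Σ(v(t))[z(ξ,t) + (𝒦₂ z(·,t))] + (𝒜 z(·,t))(ξ))ᵀ Q(ξ) z(ξ,t) dξ + F(t)ᵀ v(t). -/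
open MeasureTheory Matrix Set

noncomputable section

attribute [local instance] Matrix.normedAddCommGroup Matrix.normedSpace

abbrev Vec2 := Fin 2 → ℝ
abbrev Mat2 := Matrix (Fin 2) (Fin 2) ℝ

/-- Nondimensional pressure distribution `p̄(ξ) = (a/(1-e^{-a})) e^{-aξ}`. -/
def pbar (a ξ : ℝ) : ℝ := a / (1 - Real.exp (-a)) * Real.exp (-a * ξ)

/-- The physical parameters of the single-track tire model. -/
structure TireParams where
  vx : ℝ
  L1 : ℝ
  L2 : ℝ
  Fz1 : ℝ
  Fz2 : ℝ
  σ1 : ℝ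
  σ2 : ℝ
  a1 : ℝ
  a2 : ℝ
  φ1 : ℝ
  φ2 : ℝ
  vx_pos : 0 < vx
  L1_pos : 0 < L1
  L2_pos : 0 < L2
  Fz1_pos : 0 < Fz1
  Fz2_pos : 0 < Fz2
  σ1_pos : 0 < σ1
  σ2_pos : 0 < σ2
  a1_pos : 0 < a1
  a2_pos : 0 < a2
  φ1_mem : φ1 ∈ Set.Ioc (0:ℝ) 1
  φ2_mem : φ2 ∈ Set.Ioc (0:ℝ) 1

namespace TireParams

variable (P : TireParams)

def ψ1 : ℝ := 1 - P.φ1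
def ψ2 : ℝ := 1 - P.φ2

def Λmat : Mat2 := Matrix.diagonal ![P.vx / P.L1, P.vx / P.L2]

def Hmat : Mat2 := (2:ℝ) • Matrix.diagonal ![P.φ1, P.φ2]

def K1 (ξ : ℝ) : Mat2 :=
  Matrix.diagonal ![P.Fz1 * P.σ1 * pbar P.a1 ξ, P.Fz2 * P.σ2 * pbar P.a2 ξ]

def K2 (ξ : ℝ) : Mat2 :=
  -Matrix.diagonal ![P.ψ1 * pbar P.a1 ξ, P.ψ2 * pbar P.a2 ξ]

def K3 (ξ : ℝ) : Mat2 :=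
  -P.vx • Matrix.diagonal ![P.ψ1 / P.L1 * deriv (pbar P.a1) ξ, P.ψ2 / P.L2 * deriv (pbar P.a2) ξ]

def K4 : Mat2 :=
  P.vx • Matrix.diagonal ![P.ψ1 / P.L1 * pbar P.a1 1, P.ψ2 / P.L2 * pbar P.a2 1]

def Q (ξ : ℝ) : Mat2 := P.K1 ξ * (P.Hmat)⁻¹

/-- `(𝒦ζ) = ∫₀¹ K(ξ) ζ(ξ) dξ`. -/
def Kop (K : ℝ → Mat2) (ζ : ℝ → Vec2) : Vec2 := ∫ ξ in (0:ℝ)..1, (K ξ).mulVec (ζ ξ)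

def K1op (ζ : ℝ → Vec2) : Vec2 := Kop P.K1 ζ

def K2op (ζ : ℝ → Vec2) : Vec2 := Kop P.K2 ζ

/-- `(𝒦₃ζ) = ∫₀¹ K₃(ξ)ζ(ξ)dξ + K₄ ζ(1)`. -/
def K3op (ζ : ℝ → Vec2) : Vec2 := Kop P.K3 ζ + (P.K4).mulVec (ζ 1)

/-- `(𝒜ζ)(ξ) = -Λ ζ'(ξ) + (𝒦₃ζ)`, expressed through a given derivative `ζ'`. -/
def Aop (ζ ζ' : ℝ → Vec2) (ξ : ℝ) : Vec2 := -(P.Λmat).mulVec (ζ' ξ) + P.K3op ζ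

end TireParams

/-- `ζ` is C¹ on `[0,1]` with derivative `ζ'`. -/
def IsC1On01 (ζ ζ' : ℝ → Vec2) : Prop :=
  (∀ ξ ∈ Icc (0:ℝ) 1, HasDerivWithinAt ζ (ζ' ξ) (Icc (0:ℝ) 1) ξ) ∧
    ContinuousOn ζ' (Icc (0:ℝ) 1)

/-- Square integrability on `(0,1)`. -/
def SqIntegrableOn01 (ζ : ℝ → Vec2) : Prop :=
  Measurable ζ ∧ IntervalIntegrable (fun ξ => ∑ i, (ζ ξ i) ^ 2) volume 0 1

/-- Assumption 1 (strict dissipativity of `𝒜`). -/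
def Assumption1 (P : TireParams) (ω : ℝ) : Prop :=
  ∀ ζ ζ' : ℝ → Vec2, IsC1On01 ζ ζ' → ζ 0 = 0 →
    (∫ ξ in (0:ℝ)..1, P.Aop ζ ζ' ξ ⬝ᵥ (P.Q ξ).mulVec (ζ ξ)) ≤
      -ω * ∫ ξ in (0:ℝ)..1, ∑ i, (ζ ξ i) ^ 2

/-- Assumption 2 (dissipativity of the source `Σ`). -/
def Assumption2 (P : TireParams) (S : Vec2 → Mat2) : Prop :=
  ∀ y : Vec2, ∀ ζ : ℝ → Vec2, SqIntegrableOn01 ζ →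
    (∫ ξ in (0:ℝ)..1, ζ ξ ⬝ᵥ (P.Q ξ).mulVec ((S y).mulVec (ζ ξ + P.K2op ζ))) ≤ 0

/-- `z` (with partial derivatives `zξ`, `zt`) is a classical solution on `[0,T]` of the tire
PDE with input `v`: `∂z/∂t + Λ ∂z/∂ξ = θΣ(v(t))[z + 𝒦₂z] + 𝒦₃z + Hv(t)`, `z(0,t) = 0`. -/
def IsClassicalSolution (P : TireParams) (θ : ℝ) (S : Vec2 → Mat2) (T : ℝ)
    (v : ℝ → Vec2) (z zξ zt : ℝ → ℝ → Vec2) : Prop :=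
  (∀ t ∈ Icc (0:ℝ) T, ∀ ξ ∈ Icc (0:ℝ) 1,
      HasDerivWithinAt (fun s => z s t) (zξ ξ t) (Icc (0:ℝ) 1) ξ) ∧
  (∀ ξ ∈ Icc (0:ℝ) 1, ∀ t ∈ Icc (0:ℝ) T,
      HasDerivWithinAt (fun s => z ξ s) (zt ξ t) (Icc (0:ℝ) T) t) ∧
  ContinuousOn (fun p : ℝ × ℝ => z p.1 p.2) (Icc (0:ℝ) 1 ×ˢ Icc (0:ℝ) T) ∧
  ContinuousOn (fun p : ℝ × ℝ => zξ p.1 p.2) (Icc (0:ℝ) 1 ×ˢ Icc (0:ℝ) T) ∧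
  ContinuousOn (fun p : ℝ × ℝ => zt p.1 p.2) (Icc (0:ℝ) 1 ×ˢ Icc (0:ℝ) T) ∧
  (∀ ξ ∈ Ioo (0:ℝ) 1, ∀ t ∈ Ioo (0:ℝ) T,
      zt ξ t + (P.Λmat).mulVec (zξ ξ t) =
        θ • (S (v t)).mulVec (z ξ t + P.K2op (fun s => z s t)) +
          P.K3op (fun s => z s t) + (P.Hmat).mulVec (v t)) ∧
  (∀ t ∈ Icc (0:ℝ) T, z 0 t = 0)

/-- The storage function `V(t) = ½∫₀¹ z(ξ,t)ᵀ Q(ξ) z(ξ,t) dξ`. -/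
def storage (P : TireParams) (z : ℝ → ℝ → Vec2) (t : ℝ) : ℝ :=
  (1/2) * ∫ ξ in (0:ℝ)..1, z ξ t ⬝ᵥ (P.Q ξ).mulVec (z ξ t)

/-- The output `F(t) = (𝒦₁ z(·,t))`. -/
def outputF (P : TireParams) (z : ℝ → ℝ → Vec2) (t : ℝ) : Vec2 :=
  P.K1op (fun s => z s t)

/-!
Differentiating under the integral sign and using the symmetry of `Q`, one gets
`V′(t) = ∫₀¹ ∂ₜz(ξ,t)ᵀ Q(ξ) z(ξ,t) dξ`. Substituting the PDE for `∂ₜz`, the forcing term contributes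
`∫₀¹ (H v)ᵀ Q z dξ`, and since diagonal matrices commute, `H Q = H K₁ H⁻¹ = K₁`, so that this
contribution is exactly the supplied power `F(t)ᵀ v(t)`.
-/

open scoped Topology

section Calculus

lemma continuousOn_mulVec {X R m n : Type*} [TopologicalSpace X] [TopologicalSpace R]
    [NonUnitalNonAssocSemiring R] [ContinuousAdd R] [ContinuousMul R] [Fintype n] {s : Set X}
    {M : X → Matrix m n R} {w : X → n → R} (hM : ContinuousOn M s) (hw : ContinuousOn w s) :
    ContinuousOn (fun x => M x *ᵥ w x) s := by
  rw [continuousOn_iff_continuous_domRestrict] at hM hw ⊢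
  exact hM.matrix_mulVec hw

lemma continuousOn_dotProduct {X R n : Type*} [TopologicalSpace X] [TopologicalSpace R] [Mul R]
    [AddCommMonoid R] [ContinuousAdd R] [ContinuousMul R] [Fintype n] {s : Set X}
    {u w : X → n → R} (hu : ContinuousOn u s) (hw : ContinuousOn w s) :
    ContinuousOn (fun x => u x ⬝ᵥ w x) s := by
  rw [continuousOn_iff_continuous_domRestrict] at hu hw ⊢
  exact hu.dotProduct hw

lemma hasDerivAt_dotProduct {𝕜 n : Type*} [NontriviallyNormedField 𝕜] [Fintype n]
    {u w : 𝕜 → n → 𝕜} {u' w' : n → 𝕜} {t : 𝕜} (hu : HasDerivAt u u' t) (hw : HasDerivAt w w' t) :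
    HasDerivAt (fun s => u s ⬝ᵥ w s) (u' ⬝ᵥ w t + u t ⬝ᵥ w') t := by
  simp only [dotProduct, ← Finset.sum_add_distrib]
  exact HasDerivAt.fun_sum fun i _ => (hasDerivAt_pi.1 hu i).mul (hasDerivAt_pi.1 hw i)

lemma hasDerivAt_mulVec {𝕜 m n : Type*} [NontriviallyNormedField 𝕜] [Finite m] [Fintype n]
    (M : Matrix m n 𝕜) {w : 𝕜 → n → 𝕜} {w' : n → 𝕜} {t : 𝕜} (hw : HasDerivAt w w' t) :
    HasDerivAt (fun s => M *ᵥ w s) (M *ᵥ w') t := by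
  have := Fintype.ofFinite m
  refine hasDerivAt_pi.2 fun i => ?_
  refine (hasDerivAt_dotProduct (hasDerivAt_const t (M i)) hw).congr_deriv ?_
  rw [zero_dotProduct, zero_add, mulVec]

lemma dotProduct_mulVec_comm_of_isSymm {R n : Type*} [NonUnitalCommSemiring R] [Fintype n]
    {M : Matrix n n R} (hM : M.IsSymm) (u w : n → R) : u ⬝ᵥ M *ᵥ w = w ⬝ᵥ M *ᵥ u := by
  rw [dotProduct_mulVec, ← mulVec_transpose, hM.eq, dotProduct_comm]

lemma hasDerivAt_quadraticForm {𝕜 n : Type*} [NontriviallyNormedField 𝕜] [Fintype n]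
    {M : Matrix n n 𝕜} (hM : M.IsSymm) {w : 𝕜 → n → 𝕜} {w' : n → 𝕜} {t : 𝕜}
    (hw : HasDerivAt w w' t) :
    HasDerivAt (fun s => w s ⬝ᵥ M *ᵥ w s) (2 * (w' ⬝ᵥ M *ᵥ w t)) t := by
  refine (hasDerivAt_dotProduct hw (hasDerivAt_mulVec M hw)).congr_deriv ?_
  rw [dotProduct_mulVec_comm_of_isSymm hM (w t) w', two_mul]

lemma intervalIntegral_dotProduct {n : Type*} [Fintype n] {μ : Measure ℝ} {a b : ℝ}
    {f : ℝ → n → ℝ} (hf : IntervalIntegrable f μ a b) (u : n → ℝ) :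
    (∫ ξ in a..b, f ξ ∂μ) ⬝ᵥ u = ∫ ξ in a..b, f ξ ⬝ᵥ u ∂μ :=
  (((dotProductBilin ℝ ℝ).flip u).toContinuousLinearMap.intervalIntegral_comp_comm hf).symm

lemma hasDerivAt_intervalIntegral_of_continuousOn {𝕜 E : Type*} [RCLike 𝕜] [NormedAddCommGroup E]
    [NormedSpace ℝ E] [NormedSpace 𝕜 E] {a b : ℝ} {f f' : ℝ → 𝕜 → E} {U : Set 𝕜} {t : 𝕜}
    (hU : U ∈ 𝓝 t) (hf : ∀ s ∈ U, ContinuousOn (fun ξ => f ξ s) (uIcc a b))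
    (hf' : ContinuousOn (fun p : ℝ × 𝕜 => f' p.1 p.2) (uIcc a b ×ˢ U))
    (hderiv : ∀ ξ ∈ uIcc a b, ∀ s ∈ U, HasDerivAt (f ξ) (f' ξ s) s) :
    HasDerivAt (fun s => ∫ ξ in a..b, f ξ s) (∫ ξ in a..b, f' ξ t) t := by
  obtain ⟨K, hK, hKU, hKcompact⟩ := local_compact_nhds hU
  obtain ⟨C, hC⟩ := (isCompact_uIcc.prod hKcompact).exists_bound_of_continuousOn
    (hf'.mono (prod_mono_right hKU))
  have hfint : ∀ s ∈ U, IntervalIntegrable (fun ξ => f ξ s) volume a b :=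
    fun s hs => (hf s hs).intervalIntegrable
  have hf'int : IntervalIntegrable (fun ξ => f' ξ t) volume a b :=
    (hf'.uncurry_right t (mem_of_mem_nhds hU)).intervalIntegrable
  refine (intervalIntegral.hasDerivAt_integral_of_dominated_loc_of_deriv_le
    (F := fun s ξ => f ξ s) (F' := fun s ξ => f' ξ s) (bound := fun _ => C) hK
    ?_ (hfint t (mem_of_mem_nhds hU)) hf'int.aestronglyMeasurable_restrict_uIoc
    ?_ intervalIntegrable_const ?_).2
  · filter_upwards [hU] with s hs using (hfint s hs).aestronglyMeasurable_restrict_uIoc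
  · exact .of_forall fun ξ hξ s hs => hC (ξ, s) ⟨uIoc_subset_uIcc hξ, hs⟩
  · exact .of_forall fun ξ hξ s hs => hderiv ξ (uIoc_subset_uIcc hξ) s (hKU hs)

lemma hasDerivAt_integral_quadraticForm {n : Type*} [Fintype n] {a b : ℝ}
    {M : ℝ → Matrix n n ℝ} {w w' : ℝ → ℝ → n → ℝ} {U : Set ℝ} {t : ℝ} (hU : U ∈ 𝓝 t)
    (hM : ContinuousOn M (uIcc a b)) (hMsymm : ∀ ξ ∈ uIcc a b, (M ξ).IsSymm)
    (hw : ContinuousOn (fun p : ℝ × ℝ => w p.1 p.2) (uIcc a b ×ˢ U))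
    (hw' : ContinuousOn (fun p : ℝ × ℝ => w' p.1 p.2) (uIcc a b ×ˢ U))
    (hderiv : ∀ ξ ∈ uIcc a b, ∀ s ∈ U, HasDerivAt (w ξ) (w' ξ s) s) :
    HasDerivAt (fun s => ∫ ξ in a..b, w ξ s ⬝ᵥ M ξ *ᵥ w ξ s)
      (2 * ∫ ξ in a..b, w' ξ t ⬝ᵥ M ξ *ᵥ w ξ t) t := by
  have hMfst : ContinuousOn (fun p : ℝ × ℝ => M p.1) (uIcc a b ×ˢ U) :=
    hM.comp continuousOn_fst fun _ hp => hp.1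
  have hslice : ∀ s ∈ U, ContinuousOn (fun ξ => w ξ s) (uIcc a b) :=
    fun _ hs => hw.uncurry_right _ hs
  rw [← intervalIntegral.integral_const_mul]
  exact hasDerivAt_intervalIntegral_of_continuousOn
    (f' := fun ξ s => 2 * (w' ξ s ⬝ᵥ M ξ *ᵥ w ξ s)) hU
    (fun s hs => continuousOn_dotProduct (hslice s hs) (continuousOn_mulVec hM (hslice s hs)))
    (continuousOn_const.mul (continuousOn_dotProduct hw' (continuousOn_mulVec hMfst hw)))
    fun ξ hξ s hs => hasDerivAt_quadraticForm (hMsymm ξ hξ) (hderiv ξ hξ s hs)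

end Calculus

lemma continuous_pbar (a : ℝ) : Continuous (pbar a) := by
  unfold pbar
  fun_prop

namespace TireParams

variable (P : TireParams)

lemma Hmat_eq_diagonal : P.Hmat = diagonal ((2 : ℝ) • ![P.φ1, P.φ2]) :=
  (diagonal_smul _ _).symm

lemma isSymm_Hmat : P.Hmat.IsSymm := by
  rw [Hmat_eq_diagonal]
  exact isSymm_diagonal _

lemma isUnit_det_Hmat : IsUnit P.Hmat.det := by
  rw [Hmat_eq_diagonal, det_diagonal, Fin.prod_univ_two, isUnit_iff_ne_zero]
  exact mul_ne_zero (mul_ne_zero two_ne_zero P.φ1_mem.1.ne')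
    (mul_ne_zero two_ne_zero P.φ2_mem.1.ne')

lemma continuous_K1 : Continuous P.K1 := by
  have hp1 := continuous_pbar P.a1
  have hp2 := continuous_pbar P.a2
  unfold K1
  fun_prop

lemma continuous_Q : Continuous P.Q :=
  P.continuous_K1.matrix_mul continuous_const

lemma isSymm_Q (ξ : ℝ) : (P.Q ξ).IsSymm := by
  rw [Q, K1, Hmat_eq_diagonal, inv_diagonal, diagonal_mul_diagonal]
  exact isSymm_diagonal _

lemma Hmat_mul_Q (ξ : ℝ) : P.Hmat * P.Q ξ = P.K1 ξ := by
  have hcomm : Commute P.Hmat (P.K1 ξ) := by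
    rw [Hmat_eq_diagonal]
    exact commute_diagonal _ _
  rw [Q, ← mul_assoc, hcomm.eq, mul_nonsing_inv_cancel_right _ _ P.isUnit_det_Hmat]

lemma Hmat_mulVec_dotProduct_Q_mulVec (ξ : ℝ) (u w : Vec2) :
    P.Hmat *ᵥ u ⬝ᵥ P.Q ξ *ᵥ w = P.K1 ξ *ᵥ w ⬝ᵥ u := by
  rw [dotProduct_comm, dotProduct_mulVec_comm_of_isSymm P.isSymm_Hmat, mulVec_mulVec, Hmat_mul_Q,
    dotProduct_comm]

lemma integral_Hmat_mulVec_dotProduct_Q_mulVec {ζ : ℝ → Vec2}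
    (hζ : ContinuousOn ζ (uIcc 0 1)) (u : Vec2) :
    ∫ ξ in (0 : ℝ)..1, P.Hmat *ᵥ u ⬝ᵥ P.Q ξ *ᵥ ζ ξ = P.K1op ζ ⬝ᵥ u := by
  have hK1ζ : ContinuousOn (fun ξ => P.K1 ξ *ᵥ ζ ξ) (uIcc 0 1) :=
    continuousOn_mulVec P.continuous_K1.continuousOn hζ
  simp only [Hmat_mulVec_dotProduct_Q_mulVec]
  exact (intervalIntegral_dotProduct hK1ζ.intervalIntegrable u).symm

lemma hasDerivAt_storage {z zt : ℝ → ℝ → Vec2} {U : Set ℝ} {t : ℝ} (hU : U ∈ 𝓝 t)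
    (hz : ContinuousOn (fun p : ℝ × ℝ => z p.1 p.2) (uIcc 0 1 ×ˢ U))
    (hzt : ContinuousOn (fun p : ℝ × ℝ => zt p.1 p.2) (uIcc 0 1 ×ˢ U))
    (hderiv : ∀ ξ ∈ uIcc (0 : ℝ) 1, ∀ s ∈ U, HasDerivAt (z ξ) (zt ξ s) s) :
    HasDerivAt (storage P z) (∫ ξ in (0 : ℝ)..1, zt ξ t ⬝ᵥ P.Q ξ *ᵥ z ξ t) t := by
  refine ((hasDerivAt_integral_quadraticForm hU P.continuous_Q.continuousOn
    (fun ξ _ => P.isSymm_Q ξ) hz hzt hderiv).const_mul (1 / 2)).congr_deriv ?_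
  ring

lemma integral_dotProduct_Q_mulVec_of_forced {ζ ζt g : ℝ → Vec2} {u : Vec2}
    (hζ : ContinuousOn ζ (uIcc 0 1)) (hζt : ContinuousOn ζt (uIcc 0 1))
    (hforced : ∀ ξ ∈ Ioo (0 : ℝ) 1, ζt ξ = g ξ + P.Hmat *ᵥ u) :
    ∫ ξ in (0 : ℝ)..1, ζt ξ ⬝ᵥ P.Q ξ *ᵥ ζ ξ =
      (∫ ξ in (0 : ℝ)..1, g ξ ⬝ᵥ P.Q ξ *ᵥ ζ ξ) + P.K1op ζ ⬝ᵥ u := by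
  have hQζ : ContinuousOn (fun ξ => P.Q ξ *ᵥ ζ ξ) (uIcc 0 1) :=
    continuousOn_mulVec P.continuous_Q.continuousOn hζ
  rw [← sub_eq_iff_eq_add, ← P.integral_Hmat_mulVec_dotProduct_Q_mulVec hζ,
    ← intervalIntegral.integral_sub
      (continuousOn_dotProduct hζt hQζ).intervalIntegrable
      (continuousOn_dotProduct continuousOn_const hQζ).intervalIntegrable]
  refine intervalIntegral.integral_congr_Ioo_of_le zero_le_one fun ξ hξ => ?_
  rw [← sub_dotProduct, hforced ξ hξ, add_sub_cancel_right]

end TireParams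

theorem statement1_general (P : TireParams) (θ : ℝ) (S : Vec2 → Mat2) (T : ℝ) (v : ℝ → Vec2)
    (z zξ zt : ℝ → ℝ → Vec2)
    (_hzξ : ∀ t ∈ Icc (0 : ℝ) T, ∀ ξ ∈ Icc (0 : ℝ) 1,
      HasDerivWithinAt (fun s => z s t) (zξ ξ t) (Icc (0 : ℝ) 1) ξ)
    (hzt : ∀ ξ ∈ Icc (0 : ℝ) 1, ∀ t ∈ Icc (0 : ℝ) T,
      HasDerivWithinAt (fun s => z ξ s) (zt ξ t) (Icc (0 : ℝ) T) t)
    (hz_cont : ContinuousOn (fun p : ℝ × ℝ => z p.1 p.2) (Icc (0 : ℝ) 1 ×ˢ Icc (0 : ℝ) T))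
    (hzt_cont : ContinuousOn (fun p : ℝ × ℝ => zt p.1 p.2) (Icc (0 : ℝ) 1 ×ˢ Icc (0 : ℝ) T))
    (hpde : ∀ ξ ∈ Ioo (0 : ℝ) 1, ∀ t ∈ Ioo (0 : ℝ) T,
      zt ξ t + P.Λmat *ᵥ zξ ξ t =
        θ • S (v t) *ᵥ (z ξ t + P.K2op (fun s => z s t)) +
          P.K3op (fun s => z s t) + P.Hmat *ᵥ v t) :
    ∀ t ∈ Ioo (0 : ℝ) T,
      HasDerivAt (storage P z)
        ((∫ ξ in (0 : ℝ)..1,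
            (θ • S (v t) *ᵥ (z ξ t + P.K2op (fun s => z s t)) +
                P.Aop (fun s => z s t) (fun s => zξ s t) ξ) ⬝ᵥ P.Q ξ *ᵥ z ξ t) +
          outputF P z t ⬝ᵥ v t) t := by
  intro t ht
  have hsub : Icc (0 : ℝ) 1 ×ˢ Ioo 0 T ⊆ Icc 0 1 ×ˢ Icc 0 T :=
    prod_mono_right Ioo_subset_Icc_self
  have hderiv : ∀ ξ ∈ Icc (0 : ℝ) 1, ∀ s ∈ Ioo 0 T, HasDerivAt (z ξ) (zt ξ s) s :=
    fun ξ hξ s hs => (hzt ξ hξ s (Ioo_subset_Icc_self hs)).hasDerivAt (Icc_mem_nhds hs.1 hs.2)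
  have hforced : ∀ ξ ∈ Ioo (0 : ℝ) 1, zt ξ t =
      (θ • S (v t) *ᵥ (z ξ t + P.K2op (fun s => z s t)) +
        P.Aop (fun s => z s t) (fun s => zξ s t) ξ) + P.Hmat *ᵥ v t := fun ξ hξ => by
    rw [eq_sub_of_add_eq (hpde ξ hξ t ht), TireParams.Aop]
    abel
  rw [← uIcc_of_le (zero_le_one' ℝ)] at hsub hderiv hz_cont hzt_cont
  have hz_slice := hz_cont.uncurry_right t (Ioo_subset_Icc_self ht)
  have hzt_slice := hzt_cont.uncurry_right t (Ioo_subset_Icc_self ht)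
  exact (P.hasDerivAt_storage (isOpen_Ioo.mem_nhds ht) (hz_cont.mono hsub)
    (hzt_cont.mono hsub) hderiv).congr_deriv
    (P.integral_dotProduct_Q_mulVec_of_forced hz_slice hzt_slice hforced)

/-- along classical solutions, the storage function `V` is differentiable on
`(0,T)` with `V'(t) = ∫₀¹ (θΣ(v(t))[z + 𝒦₂z] + 𝒜z)ᵀ Q z dξ + F(t)ᵀv(t)`. -/
theorem statement1 (P : TireParams) (θ : ℝ) (hθ : 0 ≤ θ)
    (S : Vec2 → Mat2) (hS : Continuous S)
    (T : ℝ) (hT : 0 < T) (v : ℝ → Vec2) (hv : ContinuousOn v (Icc (0:ℝ) T))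
    (z zξ zt : ℝ → ℝ → Vec2) (hz : IsClassicalSolution P θ S T v z zξ zt) :
    ∀ t ∈ Ioo (0:ℝ) T,
      HasDerivAt (storage P z)
        ((∫ ξ in (0:ℝ)..1,
            (θ • (S (v t)).mulVec (z ξ t + P.K2op (fun s => z s t)) +
                P.Aop (fun s => z s t) (fun s => zξ s t) ξ) ⬝ᵥ (P.Q ξ).mulVec (z ξ t)) +
          outputF P z t ⬝ᵥ v t) t := by
  obtain ⟨hzξ, hzt, hz_cont, -, hzt_cont, hpde, -⟩ := hz
  exact statement1_general P θ S T v z zξ zt hzξ hzt hz_cont hzt_cont hpde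
end
end

section
/- Suppose φ₁ = φ₂ = 1 (so ψ₁ = ψ₂ = 0, K₃ ≡ 0, K₄ = 0, and (𝒜ζ)(ξ) = −Λζ′(ξ)). Set p̄_{0,i} := a_i/(1 − e^{−a_i}) and ω := min_{i∈{1,2}} v_x a_i F_{zi} σ_i p̄_{0,i} e^{−a_i}/(4 L_i). Then ω > 0 and, for every C¹ function ζ : [0,1] → ℝ² with ζ(0) = 0, ∫₀¹ (−Λζ′(ξ))ᵀ Q(ξ) ζ(ξ) dξ ≤ −ω ∫₀¹ ‖ζ(ξ)‖² dξ. In other words, Assumption 1 is satisfied when ψ₁ = ψ₂ = 0, with the explicit constant ω above. -/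
/-!
For `wᵢ` decreasing fast enough, `wᵢ' ≤ -2ω`, differentiate the Lyapunov function `∑ᵢ wᵢ ζᵢ²`.
Its increment over the interval is nonnegative, because `ζ` vanishes at the left endpoint, and it
is the integral of `∑ᵢ (wᵢ' ζᵢ² + 2 wᵢ ζᵢ' ζᵢ)`; hence `ω ∫ ∑ᵢ ζᵢ² ≤ ∫ ∑ᵢ wᵢ ζᵢ' ζᵢ`.
The diagonal entries of `ΛQ` are constant multiples of the pressures `p̄ᵢ`, so they satisfy
`wᵢ' = -aᵢ wᵢ ≤ -aᵢ wᵢ(1)` on `[0, 1]`, which gives the rate `ω = minᵢ aᵢ wᵢ(1) / 2`.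
-/

open MeasureTheory Matrix Set

noncomputable section

attribute [local instance] Matrix.normedAddCommGroup Matrix.normedSpace

section WeightedEnergy

variable {a b ω : ℝ}

theorem mul_integral_norm_sq_le_integral_mul_inner {E : Type*} [NormedAddCommGroup E]
    [InnerProductSpace ℝ E] {f f' : ℝ → E} {w w' : ℝ → ℝ} (hab : a ≤ b)
    (hf : ∀ x ∈ Icc a b, HasDerivWithinAt f (f' x) (Icc a b) x) (hf' : ContinuousOn f' (Icc a b))
    (hw : ∀ x ∈ Icc a b, HasDerivWithinAt w (w' x) (Icc a b) x)
    (hw' : ∀ x ∈ Ioo a b, w' x ≤ -(2 * ω)) (hwb : 0 ≤ w b) (hfa : f a = 0) :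
    ω * ∫ x in a..b, ‖f x‖ ^ 2 ≤ ∫ x in a..b, w x * inner ℝ (f x) (f' x) := by
  have hf_cont : ContinuousOn f (Icc a b) := HasDerivWithinAt.continuousOn hf
  have hw_cont : ContinuousOn w (Icc a b) := HasDerivWithinAt.continuousOn hw
  have h_sq : ContinuousOn (fun x => ω * ‖f x‖ ^ 2) (Icc a b) := by fun_prop
  have h_inner : ContinuousOn (fun x => w x * inner ℝ (f x) (f' x)) (Icc a b) := by fun_prop
  have h_deriv : ∀ x ∈ Ioo a b, HasDerivWithinAt (fun x => w x * ‖f x‖ ^ 2)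
      (w' x * ‖f x‖ ^ 2 + w x * (2 * inner ℝ (f x) (f' x))) (Ioi x) x := fun x hx =>
    have hx' := Ioo_subset_Icc_self hx
    (((hw x hx').mul (hf x hx').norm_sq).hasDerivAt (Icc_mem_nhds hx.1 hx.2)).hasDerivWithinAt
  have h_energy : w b * ‖f b‖ ^ 2 - w a * ‖f a‖ ^ 2 ≤
      ∫ x in a..b, 2 * (w x * inner ℝ (f x) (f' x) - ω * ‖f x‖ ^ 2) := by
    refine intervalIntegral.sub_le_integral_of_hasDeriv_right_of_le hab (by fun_prop) h_deriv
      (ContinuousOn.integrableOn_Icc (by fun_prop)) fun x hx => ?_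
    linarith [mul_le_mul_of_nonneg_right (hw' x hx) (sq_nonneg ‖f x‖)]
  rw [intervalIntegral.integral_const_mul, intervalIntegral.integral_sub
    (h_inner.intervalIntegrable_of_Icc hab) (h_sq.intervalIntegrable_of_Icc hab),
    intervalIntegral.integral_const_mul, hfa, norm_zero] at h_energy
  linarith [mul_nonneg hwb (sq_nonneg ‖f b‖)]

theorem mul_integral_sum_sq_le_integral_sum_mul {ι : Type*} [Fintype ι] {f f' : ℝ → ι → ℝ}
    {w w' : ι → ℝ → ℝ} (hab : a ≤ b)
    (hf : ∀ x ∈ Icc a b, HasDerivWithinAt f (f' x) (Icc a b) x) (hf' : ContinuousOn f' (Icc a b))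
    (hw : ∀ i, ∀ x ∈ Icc a b, HasDerivWithinAt (w i) (w' i x) (Icc a b) x)
    (hw' : ∀ i, ∀ x ∈ Ioo a b, w' i x ≤ -(2 * ω)) (hwb : ∀ i, 0 ≤ w i b) (hfa : f a = 0) :
    ω * ∫ x in a..b, ∑ i, f x i ^ 2 ≤ ∫ x in a..b, ∑ i, w i x * (f' x i * f x i) := by
  have hf_cont : ContinuousOn f (Icc a b) := HasDerivWithinAt.continuousOn hf
  have hw_cont (i : ι) : ContinuousOn (w i) (Icc a b) := HasDerivWithinAt.continuousOn (hw i)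
  rw [intervalIntegral.integral_finsetSum fun i _ =>
      ContinuousOn.intervalIntegrable_of_Icc hab (by fun_prop),
    intervalIntegral.integral_finsetSum fun i _ =>
      ContinuousOn.intervalIntegrable_of_Icc hab (by fun_prop), Finset.mul_sum]
  refine Finset.sum_le_sum fun i _ => ?_
  simpa only [Real.norm_eq_abs, sq_abs, real_inner_eq_re_inner, RCLike.inner_apply, conj_trivial,
    RCLike.re_to_real] using
    mul_integral_norm_sq_le_integral_mul_inner hab
      (fun x hx => hasDerivWithinAt_pi.mp (hf x hx) i) (continuousOn_pi.mp hf' i) (hw i) (hw' i)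
      (hwb i) (congrFun hfa i)

end WeightedEnergy

section Pressure

variable {a : ℝ}

theorem hasDerivAt_pbar (a ξ : ℝ) : HasDerivAt (pbar a) (-a * pbar a ξ) ξ := by
  have h_exp : HasDerivAt (fun ξ => Real.exp (-a * ξ)) (Real.exp (-a * ξ) * (-a)) ξ :=
    (hasDerivAt_const_mul (-a)).exp
  exact (h_exp.const_mul _).congr_deriv (by simp only [pbar]; ring)

theorem pbar_pos (ha : 0 < a) (ξ : ℝ) : 0 < pbar a ξ := by
  have h_exp : 0 < 1 - Real.exp (-a) := by simpa using ha
  unfold pbar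
  positivity

theorem pbar_antitone (ha : 0 < a) : Antitone (pbar a) :=
  antitone_of_hasDerivAt_nonpos (hasDerivAt_pbar a) fun ξ =>
    mul_nonpos_of_nonpos_of_nonneg (neg_nonpos.mpr ha.le) (pbar_pos ha ξ).le

end Pressure

namespace TireParams

variable (P : TireParams)

/-- The exponents `aᵢ` of the pressure distributions, indexed by the axle. -/
def pressureExponent : Fin 2 → ℝ := ![P.a1, P.a2]

/-- The factor `(v_x / Lᵢ) F_{zi} σᵢ / (2 φᵢ)` of `p̄ᵢ` in the `i`-th diagonal entry of `ΛQ`. -/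
def weightCoeff : Fin 2 → ℝ :=
  ![P.vx / P.L1 * (P.Fz1 * P.σ1) / (2 * P.φ1), P.vx / P.L2 * (P.Fz2 * P.σ2) / (2 * P.φ2)]

/-- The `i`-th diagonal entry of `ΛQ(ξ)`, which weighs `ζᵢ²` in the Lyapunov function. -/
def weight (i : Fin 2) (ξ : ℝ) : ℝ := P.weightCoeff i * pbar (P.pressureExponent i) ξ

/-- The dissipation rate `aᵢ wᵢ(1) / 2` of the `i`-th axle, where `wᵢ` is its weight. -/
def dissipationRate (i : Fin 2) : ℝ := P.pressureExponent i * P.weight i 1 / 2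

theorem pressureExponent_pos (i : Fin 2) : 0 < P.pressureExponent i := by
  fin_cases i
  exacts [P.a1_pos, P.a2_pos]

theorem weightCoeff_pos (i : Fin 2) : 0 < P.weightCoeff i := by
  have h_axle {L F σ φ : ℝ} (hL : 0 < L) (hF : 0 < F) (hσ : 0 < σ) (hφ : 0 < φ) :
      0 < P.vx / L * (F * σ) / (2 * φ) := by
    have hvx := P.vx_pos
    positivity
  fin_cases i
  exacts [h_axle P.L1_pos P.Fz1_pos P.σ1_pos P.φ1_mem.1,
    h_axle P.L2_pos P.Fz2_pos P.σ2_pos P.φ2_mem.1]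

theorem weight_pos (i : Fin 2) (ξ : ℝ) : 0 < P.weight i ξ :=
  mul_pos (P.weightCoeff_pos i) (pbar_pos (P.pressureExponent_pos i) ξ)

theorem weight_antitone (i : Fin 2) : Antitone (P.weight i) :=
  (pbar_antitone (P.pressureExponent_pos i)).const_mul (P.weightCoeff_pos i).le

theorem hasDerivAt_weight (i : Fin 2) (ξ : ℝ) :
    HasDerivAt (P.weight i) (-P.pressureExponent i * P.weight i ξ) ξ :=
  ((hasDerivAt_pbar _ ξ).const_mul _).congr_deriv (by simp only [weight]; ring)

theorem dissipationRate_pos (i : Fin 2) : 0 < P.dissipationRate i :=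
  half_pos (mul_pos (P.pressureExponent_pos i) (P.weight_pos i 1))

theorem neg_pressureExponent_mul_weight_le (i : Fin 2) {ξ : ℝ} (hξ : ξ ≤ 1) :
    -P.pressureExponent i * P.weight i ξ ≤ -(2 * P.dissipationRate i) := by
  have h_le := mul_le_mul_of_nonneg_left (P.weight_antitone i hξ) (P.pressureExponent_pos i).le
  unfold dissipationRate
  linarith

theorem Hmat_inv : P.Hmat⁻¹ = diagonal ![(2 * P.φ1)⁻¹, (2 * P.φ2)⁻¹] := by
  have hφ1 : P.φ1 ≠ 0 := P.φ1_mem.1.ne'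
  have hφ2 : P.φ2 ≠ 0 := P.φ2_mem.1.ne'
  refine inv_eq_right_inv ?_
  ext i j
  fin_cases i <;> fin_cases j <;> simp [Hmat] <;> field_simp

theorem neg_Λmat_mulVec_dotProduct_Q_mulVec (ξ : ℝ) (z z' : Vec2) :
    -(P.Λmat *ᵥ z') ⬝ᵥ P.Q ξ *ᵥ z = -∑ i, P.weight i ξ * (z' i * z i) := by
  simp only [Q, Hmat_inv, K1, Λmat, diagonal_mul_diagonal, mulVec_diagonal, dotProduct,
    Fin.sum_univ_two, Pi.neg_apply, weight, weightCoeff, pressureExponent, cons_val_zero,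
    cons_val_one]
  ring

theorem integral_transport_le {ω : ℝ} (hω : ∀ i, ω ≤ P.dissipationRate i) {ζ ζ' : ℝ → Vec2}
    (hζ : IsC1On01 ζ ζ') (hζ0 : ζ 0 = 0) :
    ∫ ξ in (0:ℝ)..1, -(P.Λmat *ᵥ ζ' ξ) ⬝ᵥ P.Q ξ *ᵥ ζ ξ ≤
      -ω * ∫ ξ in (0:ℝ)..1, ∑ i, ζ ξ i ^ 2 := by
  simp only [neg_Λmat_mulVec_dotProduct_Q_mulVec, intervalIntegral.integral_neg, neg_mul]
  refine neg_le_neg (mul_integral_sum_sq_le_integral_sum_mul zero_le_one hζ.1 hζ.2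
    (fun i ξ _ => (P.hasDerivAt_weight i ξ).hasDerivWithinAt) (fun i ξ hξ => ?_)
    (fun i => (P.weight_pos i 1).le) hζ0)
  linarith [P.neg_pressureExponent_mul_weight_le i hξ.2.le, hω i]

end TireParams

theorem statement5_general (P : TireParams) :
    ∀ ω : ℝ,
      ω = min (P.vx * P.a1 * P.Fz1 * P.σ1 * (P.a1 / (1 - Real.exp (-P.a1))) *
                Real.exp (-P.a1) / (4 * P.L1 * P.φ1))
              (P.vx * P.a2 * P.Fz2 * P.σ2 * (P.a2 / (1 - Real.exp (-P.a2))) *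
                Real.exp (-P.a2) / (4 * P.L2 * P.φ2)) →
      0 < ω ∧
        ∀ ζ ζ' : ℝ → Vec2, IsC1On01 ζ ζ' → ζ 0 = 0 →
          (∫ ξ in (0:ℝ)..1, (-(P.Λmat).mulVec (ζ' ξ)) ⬝ᵥ (P.Q ξ).mulVec (ζ ξ)) ≤
            -ω * ∫ ξ in (0:ℝ)..1, ∑ i, (ζ ξ i) ^ 2 := by
  intro ω hω
  have hω_rate : ω = min (P.dissipationRate 0) (P.dissipationRate 1) := by
    rw [hω]
    simp only [TireParams.dissipationRate, TireParams.weight, TireParams.weightCoeff,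
      TireParams.pressureExponent, pbar, cons_val_zero, cons_val_one, mul_one]
    congr 1 <;> ring
  have hω_le : ∀ i, ω ≤ P.dissipationRate i :=
    Fin.forall_fin_two.mpr ⟨hω_rate ▸ min_le_left _ _, hω_rate ▸ min_le_right _ _⟩
  exact ⟨hω_rate ▸ lt_min (P.dissipationRate_pos 0) (P.dissipationRate_pos 1),
    fun _ _ hζ hζ0 => P.integral_transport_le hω_le hζ hζ0⟩

/-- when `φ₁ = φ₂ = 1` (so `ψᵢ = 0`), Assumption 1 holds with the explicit
constant `ω = minᵢ vx aᵢ F_{zi} σᵢ p̄₀ᵢ e^{−aᵢ}/(4Lᵢ)`, and `(𝒜ζ)(ξ) = −Λζ'(ξ)`. -/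
theorem statement5 (P : TireParams) (hφ1 : P.φ1 = 1) (hφ2 : P.φ2 = 1) :
    ∀ ω : ℝ,
      ω = min (P.vx * P.a1 * P.Fz1 * P.σ1 * (P.a1 / (1 - Real.exp (-P.a1))) *
                Real.exp (-P.a1) / (4 * P.L1))
              (P.vx * P.a2 * P.Fz2 * P.σ2 * (P.a2 / (1 - Real.exp (-P.a2))) *
                Real.exp (-P.a2) / (4 * P.L2)) →
      0 < ω ∧
        ∀ ζ ζ' : ℝ → Vec2, IsC1On01 ζ ζ' → ζ 0 = 0 →
          (∫ ξ in (0:ℝ)..1, (-(P.Λmat).mulVec (ζ' ξ)) ⬝ᵥ (P.Q ξ).mulVec (ζ ξ)) ≤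
            -ω * ∫ ξ in (0:ℝ)..1, ∑ i, (ζ ξ i) ^ 2 := by
  simpa only [hφ1, hφ2, mul_one] using statement5_general P
end
end

section
/- Let v_x, l₁, l₂ > 0 and φ₁, φ₂ ∈ (0,1], and set A₁ := [[0, −v_x],[0, 0]], A₂ := [[1, l₁],[1, −l₂]], H := 2·diag(φ₁, φ₂). Then: (a) HA₂ is invertible; (b) the pair (A₁, HA₂) is observable, i.e., the 4×2 real matrix obtained by stacking HA₂ on top of HA₂A₁ has rank 2; and (c) for every p > 0, the gain L₁ := −(A₁ + pI₂)(HA₂)⁻¹ satisfies A₁ + L₁HA₂ = −pI₂, so there exists L₁ ∈ M₂(ℝ) such that every eigenvalue of A₁ + L₁HA₂ has negative real part (A₁ + L₁HA₂ is Hurwitz). -/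
/-!
`HA₂` is square with nonzero determinant `-4φ₁φ₂(l₁ + l₂)`, so one measurement fixes the state. The
top block of the observability matrix therefore already has full rank, whatever the drift is, and
output injection through `(HA₂)⁻¹` can replace the drift by any prescribed closed-loop matrix, in
particular by `-pI`.
-/

open Matrix

noncomputable section

def A1mat (vx : ℝ) : Mat2 := !![0, -vx; 0, 0]

def A2mat (l1 l2 : ℝ) : Mat2 := !![1, l1; 1, -l2]

def Hmat2 (φ1 φ2 : ℝ) : Mat2 := (2:ℝ) • Matrix.diagonal ![φ1, φ2]

/-- A real 2×2 matrix is Hurwitz if every (complex) eigenvalue has negative real part. -/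
def IsHurwitz (A : Mat2) : Prop :=
  ∀ μ : ℂ, μ ∈ spectrum ℂ (A.map (algebraMap ℝ ℂ)) → μ.re < 0

theorem rank_fromRows_of_isUnit {m n R : Type*} [Fintype n] [DecidableEq n] [CommRing R]
    [StrongRankCondition R] {C : Matrix n n R} (hC : IsUnit C) (D : Matrix m n R) :
    (fromRows C D).rank = Fintype.card n := by
  refine le_antisymm (rank_le_card_width _) ?_
  calc
    Fintype.card n = C.rank := (rank_of_isUnit C hC).symm
    _ = ((fromRows C D).submatrix Sum.inl id).rank := rfl
    _ ≤ (fromRows C D).rank := rank_submatrix_le _ _ _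

theorem add_neg_sub_mul_nonsing_inv_mul {m n R : Type*} [Fintype n] [DecidableEq n] [CommRing R]
    {C : Matrix n n R} (hC : IsUnit C) (A T : Matrix m n R) :
    A + -((A - T) * C⁻¹) * C = T := by
  rw [Matrix.neg_mul, nonsing_inv_mul_cancel_right _ _ ((isUnit_iff_isUnit_det C).1 hC), neg_sub,
    add_sub_cancel]

theorem isHurwitz_diagonal_iff {d : Fin 2 → ℝ} : IsHurwitz (diagonal d) ↔ ∀ i, d i < 0 := by
  rw [IsHurwitz, diagonal_map (map_zero _), spectrum_diagonal, Set.forall_mem_range]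
  rfl

theorem isHurwitz_smul_one_iff {c : ℝ} : IsHurwitz (c • (1 : Mat2)) ↔ c < 0 := by
  rw [smul_one_eq_diagonal, isHurwitz_diagonal_iff, forall_const]

theorem det_Hmat2_mul_A2mat (l1 l2 φ1 φ2 : ℝ) :
    (Hmat2 φ1 φ2 * A2mat l1 l2).det = -(4 * φ1 * φ2 * (l1 + l2)) := by
  simp only [Hmat2, A2mat, det_mul, det_smul, det_diagonal, det_fin_two_of, Fintype.card_fin,
    Fin.prod_univ_two, cons_val_zero, cons_val_one]
  ring

theorem isUnit_Hmat2_mul_A2mat_iff {l1 l2 φ1 φ2 : ℝ} :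
    IsUnit (Hmat2 φ1 φ2 * A2mat l1 l2) ↔ (φ1 ≠ 0 ∧ φ2 ≠ 0) ∧ l1 + l2 ≠ 0 := by
  rw [isUnit_iff_isUnit_det, isUnit_iff_ne_zero, det_Hmat2_mul_A2mat]
  simp

theorem statement9_general (A : Mat2) {l1 l2 φ1 φ2 : ℝ} (hl : l1 + l2 ≠ 0) (hφ1 : φ1 ≠ 0)
    (hφ2 : φ2 ≠ 0) :
    IsUnit (Hmat2 φ1 φ2 * A2mat l1 l2) ∧
    (Matrix.fromRows (Hmat2 φ1 φ2 * A2mat l1 l2) (Hmat2 φ1 φ2 * A2mat l1 l2 * A)).rank = 2 ∧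
    (∀ p : ℝ,
      A + (-((A + p • (1 : Mat2)) * (Hmat2 φ1 φ2 * A2mat l1 l2)⁻¹)) *
        (Hmat2 φ1 φ2 * A2mat l1 l2) = (-p) • (1 : Mat2)) ∧
    ∃ L1 : Mat2, IsHurwitz (A + L1 * (Hmat2 φ1 φ2 * A2mat l1 l2)) := by
  have hC : IsUnit (Hmat2 φ1 φ2 * A2mat l1 l2) :=
    isUnit_Hmat2_mul_A2mat_iff.2 ⟨⟨hφ1, hφ2⟩, hl⟩
  have hgain (p : ℝ) : A + -((A + p • (1 : Mat2)) * (Hmat2 φ1 φ2 * A2mat l1 l2)⁻¹) *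
      (Hmat2 φ1 φ2 * A2mat l1 l2) = (-p) • (1 : Mat2) := by
    simpa only [neg_smul, sub_neg_eq_add] using
      add_neg_sub_mul_nonsing_inv_mul hC A ((-p) • (1 : Mat2))
  refine ⟨hC, rank_fromRows_of_isUnit hC _, hgain,
    -((A + (1 : ℝ) • (1 : Mat2)) * (Hmat2 φ1 φ2 * A2mat l1 l2)⁻¹), ?_⟩
  rw [hgain 1]
  exact isHurwitz_smul_one_iff.2 neg_one_lt_zero

/-- (a) `HA₂` is invertible; (b) the pair `(A₁, HA₂)` is observable (the
stacked 4×2 matrix has rank 2); (c) for every `p > 0`, `L₁ = −(A₁+pI)(HA₂)⁻¹` yields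
`A₁ + L₁HA₂ = −pI`, and there exists `L₁` making `A₁ + L₁HA₂` Hurwitz. -/
theorem statement9 (vx l1 l2 φ1 φ2 : ℝ) (hvx : 0 < vx) (hl1 : 0 < l1) (hl2 : 0 < l2)
    (hφ1 : φ1 ∈ Set.Ioc (0:ℝ) 1) (hφ2 : φ2 ∈ Set.Ioc (0:ℝ) 1) :
    IsUnit (Hmat2 φ1 φ2 * A2mat l1 l2) ∧
    (Matrix.fromRows (Hmat2 φ1 φ2 * A2mat l1 l2)
        (Hmat2 φ1 φ2 * A2mat l1 l2 * A1mat vx)).rank = 2 ∧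
    (∀ p : ℝ, 0 < p →
      A1mat vx +
          (-((A1mat vx + p • (1 : Mat2)) * (Hmat2 φ1 φ2 * A2mat l1 l2)⁻¹)) *
            (Hmat2 φ1 φ2 * A2mat l1 l2) = (-p) • (1 : Mat2)) ∧
    ∃ L1 : Mat2, IsHurwitz (A1mat vx + L1 * (Hmat2 φ1 φ2 * A2mat l1 l2)) := by
  have ⟨hunit, hobs, hgain, hHurwitz⟩ :=
    statement9_general (A1mat vx) (add_pos hl1 hl2).ne' hφ1.1.ne' hφ2.1.ne'
  exact ⟨hunit, hobs, fun p _ => hgain p, hHurwitz⟩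
end
end
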